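/- arXiv:1607.00921 — 2 statements merged into one kernel-verified Lean document; each statement's English description precedes it below -/
import Mathlib

section
/- Let R be a noetherian ring which is a finitely generated module over a central subring C, and suppose R is a maximal Cohen-Macaulay C-module (i.e. C-Macaulay). If C is equicodimensional, then R is equicodimensional, i.e. every maximal ideal of R has height equal to Kdim(R). -/
/-- A two-sided ideal of a (possibly noncommutative) ring is prime. -/
def IsPrimeTS {R : Type*} [Ring R] (P : TwoSidedIdeal R) : Prop :=
  P ≠ ⊤ ∧ ∀ a b : R, (∀ r : R, a * r * b ∈ P) → a ∈ P ∨ b ∈ P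

/-- Height of an element `P` in a poset with respect to a predicate (`prime`):
the supremum of lengths of strictly increasing chains of elements satisfying the
predicate and ending at `P`. -/
noncomputable def primeChainHeight {α : Type*} [Preorder α] (isP : α → Prop) (P : α) : ℕ∞ :=
  sSup {n : ℕ∞ | ∃ m : ℕ, n = (m : ℕ∞) ∧ ∃ f : Fin (m + 1) → α,
    StrictMono f ∧ (∀ i, isP (f i)) ∧ f (Fin.last m) = P}

/-- Height (codimension) of a two-sided ideal: the supremum of lengths of chains of
prime two-sided ideals descending from it. -/
noncomputable def tsHeight {R : Type*} [Ring R] (P : TwoSidedIdeal R) : ℕ∞ :=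
  primeChainHeight IsPrimeTS P

/-- Height of an ideal of a commutative ring. -/
noncomputable def cHeight {C : Type*} [CommRing C] (p : Ideal C) : ℕ∞ :=
  primeChainHeight Ideal.IsPrime p

/-- Contraction `P ∩ C` of a two-sided ideal of `R` to the central subring `C`
(given via the algebra structure map, whose image is central). -/
def contractTS {C R : Type*} [CommRing C] [Ring R] [Algebra C R]
    (P : TwoSidedIdeal R) : Ideal C :=
  Ideal.comap (algebraMap C R) (TwoSidedIdeal.asIdeal P)

/-- A two-sided ideal is maximal. -/
def IsMaximalTS {R : Type*} [Ring R] (M : TwoSidedIdeal R) : Prop :=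
  M ≠ ⊤ ∧ ∀ J : TwoSidedIdeal R, M < J → J = ⊤

/-- Krull dimension of a (possibly noncommutative) ring: the supremum of the
heights of its prime two-sided ideals. -/
noncomputable def tsKdim (R : Type*) [Ring R] : ℕ∞ :=
  ⨆ P : {P : TwoSidedIdeal R // IsPrimeTS P}, tsHeight P.1

/-- Krull dimension of a commutative ring: the supremum of heights of primes. -/
noncomputable def cKdim (C : Type*) [CommRing C] : ℕ∞ :=
  ⨆ p : {p : Ideal C // p.IsPrime}, cHeight p.1

/-- The grade `G_C(I, M)`: the supremum of the lengths of `M`-regular sequences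
consisting of elements of the ideal `I`. -/
noncomputable def cGrade {C : Type*} [CommRing C] (I : Ideal C) (M : Type*)
    [AddCommGroup M] [Module C M] : ℕ∞ :=
  sSup {n : ℕ∞ | ∃ rs : List C, n = rs.length ∧ (∀ x ∈ rs, x ∈ I) ∧
    RingTheory.Sequence.IsRegular M rs}

/-- `M` is a maximal Cohen-Macaulay `C`-module: for every maximal ideal `m` of `C`,
the `m`-grade of `M` equals the height of `m` (that is, `Kdim (C_m)`). -/
def IsMaximalCohenMacaulay (C : Type*) [CommRing C] (M : Type*)
    [AddCommGroup M] [Module C M] : Prop :=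
  ∀ m : Ideal C, m.IsMaximal → cGrade m M = cHeight m

/-!
Let `M` be a maximal ideal of `R` and `m = M ∩ C`. Then
`Kdim R ≤ Kdim C = ht m = G_C(m, R) ≤ ht M ≤ Kdim R`, for the following reasons.

* `m` is maximal, since the centre of the simple ring `R / M` is a field integral over `C`.
* `Kdim R ≤ Kdim C`, since primes `P < Q` of `R` contract to distinct primes of `C`: inverting the
  nonzero elements of `C / (P ∩ C)` turns `R / P` into a prime Artinian ring, which is simple, so
  the nonzero ideal `Q / P` contains a nonzero element of `C / (P ∩ C)`.
* `G_C(m, R) ≤ ht M`, since each term `c` of a regular sequence `c₁, …, cₖ, c` in a prime `P` of `R`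
  allows a step down to a prime `Q < P` that still contains `c₁, …, cₖ`: an ideal maximal among
  those containing `c₁, …, cₖ` and disjoint from the m-system `{cⁿ t | t ∉ P}` is such a `Q`.
-/

section ChainHeight

variable {α : Type*} [Preorder α] {isP : α → Prop}

lemma primeChainHeight_eq_height {P : α} (hP : isP P) :
    primeChainHeight isP P = Order.height (⟨P, hP⟩ : {Q // isP Q}) := by
  rw [Order.height_eq_iSup_last_eq]
  apply le_antisymm
  · refine sSup_le ?_
    rintro _ ⟨m, rfl, f, f_strictMono, f_isP, f_last⟩
    exact le_iSup₂_of_le (LTSeries.mk m (fun i ↦ ⟨f i, f_isP i⟩) fun _ _ hij ↦ f_strictMono hij)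
      (Subtype.ext f_last) le_rfl
  · refine iSup₂_le fun p p_last ↦ le_sSup
      ⟨p.length, rfl, fun i ↦ (p i).1, fun _ _ hij ↦ p.strictMono hij, fun i ↦ (p i).2, ?_⟩
    exact congrArg Subtype.val p_last

lemma primeChainHeight_le_primeChainHeight_apply {β : Type*} [Preorder β] {isQ : β → Prop}
    (g : α → β) (hg : ∀ a, isP a → isQ (g a)) (hlt : ∀ a b, isP a → a < b → g a < g b) (P : α) :
    primeChainHeight isP P ≤ primeChainHeight isQ (g P) := by
  refine sSup_le ?_
  rintro _ ⟨m, rfl, f, f_strictMono, f_isP, rfl⟩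
  exact le_sSup ⟨m, rfl, g ∘ f, fun i j hij ↦ hlt _ _ (f_isP i) (f_strictMono hij),
    fun i ↦ hg _ (f_isP i), rfl⟩

end ChainHeight

section PrimeIdeals

variable {R : Type*} [Ring R]

lemma IsPrimeTS.tsHeight_add_one_le {P Q : TwoSidedIdeal R} (hQ : IsPrimeTS Q) (hP : IsPrimeTS P)
    (hQP : Q < P) : tsHeight Q + 1 ≤ tsHeight P := by
  rw [tsHeight, tsHeight, primeChainHeight_eq_height hQ, primeChainHeight_eq_height hP]
  exact Order.height_add_one_le hQP

lemma IsPrimeTS.one_notMem {P : TwoSidedIdeal R} (hP : IsPrimeTS P) : (1 : R) ∉ P :=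
  P.one_mem_iff.not.2 hP.1

lemma mem_sSup_iff_of_directedOn {𝒮 : Set (TwoSidedIdeal R)} (hne : 𝒮.Nonempty)
    (hdir : DirectedOn (· ≤ ·) 𝒮) {x : R} : x ∈ sSup 𝒮 ↔ ∃ I ∈ 𝒮, x ∈ I := by
  let U : TwoSidedIdeal R := .mk' {x | ∃ I ∈ 𝒮, x ∈ I}
    (hne.imp fun I hI ↦ ⟨hI, I.zero_mem⟩)
    (by
      rintro x y ⟨I, hI, hx⟩ ⟨J, hJ, hy⟩
      obtain ⟨K, hK, hIK, hJK⟩ := hdir I hI J hJ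
      exact ⟨K, hK, K.add_mem (hIK hx) (hJK hy)⟩)
    (by rintro x ⟨I, hI, hx⟩; exact ⟨I, hI, I.neg_mem hx⟩)
    (by rintro x y ⟨I, hI, hy⟩; exact ⟨I, hI, I.mul_mem_left _ _ hy⟩)
    (by rintro x y ⟨I, hI, hx⟩; exact ⟨I, hI, I.mul_mem_right _ _ hx⟩)
  have mem_U (x : R) : x ∈ U ↔ ∃ I ∈ 𝒮, x ∈ I := TwoSidedIdeal.mem_mk' ..
  refine ⟨fun hx ↦ (mem_U x).1 ?_, fun ⟨I, hI, hx⟩ ↦ le_sSup hI hx⟩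
  exact (sSup_le fun I hI y hy ↦ (mem_U y).2 ⟨I, hI, hy⟩ : sSup 𝒮 ≤ U) hx

lemma mul_mul_mem_of_mem_span {I : TwoSidedIdeal R} {s t : Set R}
    (h : ∀ a ∈ s, ∀ b ∈ t, ∀ r, a * r * b ∈ I) {x y : R} (hx : x ∈ TwoSidedIdeal.span s)
    (hy : y ∈ TwoSidedIdeal.span t) (r : R) : x * r * y ∈ I := by
  have left : ∀ a ∈ s, ∀ r, a * r * y ∈ I := by
    intro a ha
    induction hy using TwoSidedIdeal.span_induction with
    | mem b hb => exact h a ha b hb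
    | zero => simp [I.zero_mem]
    | add y z _ _ hy hz => intro r; simpa only [mul_add] using I.add_mem (hy r) (hz r)
    | neg y _ hy => intro r; simpa only [mul_neg] using I.neg_mem (hy r)
    | left_absorb z y _ hy => intro r; simpa only [mul_assoc] using hy (r * z)
    | right_absorb z y _ hy =>
      intro r; simpa only [mul_assoc] using I.mul_mem_right _ z (hy r)
  induction hx using TwoSidedIdeal.span_induction generalizing r with
  | mem a ha => exact left a ha r
  | zero => simp [I.zero_mem]
  | add x z _ _ hx hz => simpa only [add_mul] using I.add_mem (hx r) (hz r)
  | neg x _ hx => simpa only [neg_mul] using I.neg_mem (hx r)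
  | left_absorb z x _ hx => simpa only [mul_assoc] using I.mul_mem_left z _ (hx r)
  | right_absorb z x _ hx => simpa only [mul_assoc] using hx (z * r)

/-- A (nonempty) m-system: the noncommutative analogue of a multiplicatively closed set, to which
an ideal can be kept disjoint while being enlarged to a prime ideal. -/
def IsMSystem (S : Set R) : Prop :=
  S.Nonempty ∧ ∀ a ∈ S, ∀ b ∈ S, ∃ r, a * r * b ∈ S

lemma isMSystem_singleton_one : IsMSystem ({1} : Set R) :=
  ⟨Set.singleton_nonempty 1, by rintro _ rfl _ rfl; exact ⟨1, by simp⟩⟩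

lemma IsMSystem.isPrimeTS_of_maximal_disjoint {S : Set R} (hS : IsMSystem S) {Q : TwoSidedIdeal R}
    (hQ : Maximal (fun I : TwoSidedIdeal R ↦ Disjoint (I : Set R) S) Q) : IsPrimeTS Q := by
  refine ⟨?_, fun a b hab ↦ ?_⟩
  · rintro rfl
    obtain ⟨s, hs⟩ := hS.1
    exact Set.disjoint_left.1 hQ.prop trivial hs
  by_contra! hcon
  have meets_of_notMem (x : R) (hx : x ∉ Q) :
      ∃ s ∈ S, s ∈ TwoSidedIdeal.span (insert x (Q : Set R)) := by
    by_contra! hdisj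
    have hle : Q ≤ TwoSidedIdeal.span (insert x (Q : Set R)) := fun y hy ↦
      TwoSidedIdeal.subset_span (Set.mem_insert_of_mem x hy)
    exact hx (hQ.le_of_ge (Set.disjoint_right.2 hdisj) hle
      (TwoSidedIdeal.subset_span (Set.mem_insert x _)))
  obtain ⟨s, hs, hsa⟩ := meets_of_notMem a hcon.1
  obtain ⟨t, ht, htb⟩ := meets_of_notMem b hcon.2
  obtain ⟨r, hr⟩ := hS.2 s hs t ht
  refine Set.disjoint_left.1 hQ.prop (mul_mul_mem_of_mem_span ?_ hsa htb r) hr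
  rintro x (rfl | hx) y (rfl | hy) r
  · exact hab r
  · exact Q.mul_mem_left _ _ hy
  all_goals exact Q.mul_mem_right _ _ (Q.mul_mem_right _ _ hx)

lemma IsMSystem.exists_isPrimeTS_ge_disjoint {S : Set R} (hS : IsMSystem S) {I : TwoSidedIdeal R}
    (hI : Disjoint (I : Set R) S) : ∃ Q, IsPrimeTS Q ∧ I ≤ Q ∧ Disjoint (Q : Set R) S := by
  have sSup_disjoint : ∀ 𝒞 ⊆ {J : TwoSidedIdeal R | Disjoint (J : Set R) S}, IsChain (· ≤ ·) 𝒞 →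
      𝒞.Nonempty → Disjoint ((sSup 𝒞 : TwoSidedIdeal R) : Set R) S := by
    intro 𝒞 h𝒞 hchain hne
    refine Set.disjoint_left.2 fun x hx ↦ ?_
    obtain ⟨J, hJ, hxJ⟩ := (mem_sSup_iff_of_directedOn hne hchain.directedOn).1 hx
    exact Set.disjoint_left.1 (h𝒞 hJ) hxJ
  obtain ⟨Q, hIQ, hQ⟩ := zorn_le_nonempty₀ {J : TwoSidedIdeal R | Disjoint (J : Set R) S}
    (fun 𝒞 h𝒞 hchain J hJ ↦
      ⟨sSup 𝒞, sSup_disjoint 𝒞 h𝒞 hchain ⟨J, hJ⟩, fun _ ↦ le_sSup⟩) I hI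
  exact ⟨Q, hS.isPrimeTS_of_maximal_disjoint hQ, hIQ, hQ.prop⟩

lemma IsMaximalTS.isPrimeTS {M : TwoSidedIdeal R} (hM : IsMaximalTS M) : IsPrimeTS M := by
  refine isMSystem_singleton_one.isPrimeTS_of_maximal_disjoint ⟨?_, fun J hJ hMJ ↦ ?_⟩
  · exact Set.disjoint_singleton_right.2 (M.one_mem_iff.not.2 hM.1)
  · by_contra hJM
    have hJ_top : J = ⊤ := hM.2 J (lt_of_le_not_ge hMJ hJM)
    exact Set.disjoint_singleton_right.1 hJ (J.one_mem_iff.2 hJ_top)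

end PrimeIdeals

section Quotient

variable {R : Type*} [Ring R]

lemma IsPrimeTS.bot_quotient {P : TwoSidedIdeal R} (hP : IsPrimeTS P) :
    IsPrimeTS (⊥ : TwoSidedIdeal (R ⧸ P.asIdeal)) := by
  have mk_mem_bot (x : R) : Ideal.Quotient.mk P.asIdeal x ∈ (⊥ : TwoSidedIdeal _) ↔ x ∈ P := by
    rw [TwoSidedIdeal.mem_bot, Ideal.Quotient.eq_zero_iff_mem, TwoSidedIdeal.mem_asIdeal]
  refine ⟨fun h ↦ hP.one_notMem ((mk_mem_bot 1).1 (h ▸ trivial)), fun x y hxy ↦ ?_⟩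
  obtain ⟨x, rfl⟩ := Ideal.Quotient.mk_surjective x
  obtain ⟨y, rfl⟩ := Ideal.Quotient.mk_surjective y
  rw [mk_mem_bot, mk_mem_bot]
  refine hP.2 x y fun r ↦ (mk_mem_bot _).1 ?_
  simpa only [map_mul] using hxy (Ideal.Quotient.mk _ r)

lemma IsMaximalTS.isSimpleRing_quotient {M : TwoSidedIdeal R} (hM : IsMaximalTS M) :
    IsSimpleRing (R ⧸ M.asIdeal) := by
  let π := Ideal.Quotient.mk M.asIdeal
  have : Nontrivial (R ⧸ M.asIdeal) :=
    Ideal.Quotient.nontrivial_iff.2 ((Ideal.ne_top_iff_one _).2 hM.isPrimeTS.one_notMem)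
  refine .of_eq_bot_or_eq_top fun J ↦ ?_
  have hMJ : M ≤ J.comap π := fun x hx ↦ by
    rw [TwoSidedIdeal.mem_comap, Ideal.Quotient.eq_zero_iff_mem.2 hx]
    exact J.zero_mem
  obtain hM_eq | hM_lt := hMJ.eq_or_lt
  · refine .inl (eq_bot_iff.2 fun x hx ↦ ?_)
    obtain ⟨x, rfl⟩ := Ideal.Quotient.mk_surjective x
    have hxM : x ∈ M := hM_eq ▸ (TwoSidedIdeal.mem_comap π).2 hx
    exact Ideal.Quotient.eq_zero_iff_mem.2 hxM
  · have one_mem : (1 : R) ∈ J.comap π := hM.2 _ hM_lt ▸ trivial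
    rw [TwoSidedIdeal.mem_comap, map_one] at one_mem
    exact .inr (J.one_mem_iff.1 one_mem)

end Quotient

section PrimeArtinian

variable {A : Type*} [Ring A]

lemma IsPrimeTS.eq_zero_or_eq_zero (hA : IsPrimeTS (⊥ : TwoSidedIdeal A)) {a b : A}
    (h : ∀ r, a * r * b = 0) : a = 0 ∨ b = 0 :=
  hA.2 a b h

lemma IsPrimeTS.eq_bot_of_isNilpotent (hA : IsPrimeTS (⊥ : TwoSidedIdeal A)) {I : Ideal A}
    (hI : IsNilpotent I) : I = ⊥ := by
  obtain ⟨n, hn⟩ := hI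
  by_contra hI_ne
  obtain ⟨b, hbI, hb⟩ := Submodule.exists_mem_ne_zero_of_ne_bot hI_ne
  have pow_ne_bot (k : ℕ) : I ^ k ≠ ⊥ := by
    induction k with
    | zero =>
      have : Nontrivial A := ⟨b, 0, hb⟩
      rw [Submodule.pow_zero, Ideal.one_eq_top]
      exact top_ne_bot
    | succ k ih =>
      obtain ⟨a, haI, ha⟩ := Submodule.exists_mem_ne_zero_of_ne_bot ih
      intro hk
      refine (hA.eq_zero_or_eq_zero fun r ↦ ?_).elim ha hb
      have : a * (r * b) ∈ I ^ (k + 1) := by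
        rw [Submodule.pow_succ]
        exact Ideal.mul_mem_mul haI (I.mul_mem_left r hbI)
      rwa [hk, ← mul_assoc] at this
  exact pow_ne_bot n hn

lemma IsPrimeTS.isSimpleRing [IsArtinianRing A] (hA : IsPrimeTS (⊥ : TwoSidedIdeal A)) :
    IsSimpleRing A := by
  have : Nontrivial A := ⟨1, 0, hA.one_notMem⟩
  have : IsSemisimpleRing A := IsArtinianRing.isSemisimpleRing_iff_jacobson.2
    (hA.eq_bot_of_isNilpotent IsSemiprimaryRing.isNilpotent)
  refine .of_eq_bot_or_eq_top fun J ↦ or_iff_not_imp_left.2 fun hJ ↦ ?_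
  obtain ⟨e, he, hJe⟩ := IsSemisimpleRing.ideal_eq_span_idempotent J.asIdeal
  have mem_J (x : A) : x ∈ J ↔ ∃ y, y * e = x := by
    rw [← TwoSidedIdeal.mem_asIdeal, hJe, Ideal.mem_span_singleton']
  have mul_one_sub_eq_zero : ∀ x ∈ J, x * (1 - e) = 0 := by
    intro x hx
    obtain ⟨y, rfl⟩ := (mem_J x).1 hx
    rw [mul_assoc, he.mul_one_sub_self, mul_zero]
  obtain ⟨x, hxJ, hx⟩ := SetLike.exists_of_lt (bot_lt_iff_ne_bot.2 hJ)
  have one_sub_eq_zero : 1 - e = 0 :=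
    (hA.eq_zero_or_eq_zero fun r ↦ mul_one_sub_eq_zero _ (J.mul_mem_right x r hxJ)).resolve_left hx
  exact J.one_mem_iff.1 ((mem_J 1).2 ⟨1, by rw [one_mul, sub_eq_zero.1 one_sub_eq_zero]⟩)

end PrimeArtinian

section Localization

variable {D A B : Type*} [CommRing D] [Ring A] [Algebra D A] [Ring B] [Algebra D B]

lemma IsPrimeTS.bot_of_isLocalizedModule (S : Submonoid D) (f : A →ₐ[D] B)
    [IsLocalizedModule S f.toLinearMap] (hf : Function.Injective f)
    (hA : IsPrimeTS (⊥ : TwoSidedIdeal A)) : IsPrimeTS (⊥ : TwoSidedIdeal B) := by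
  refine ⟨fun h ↦ hA.one_notMem (hf ?_), fun x y hxy ↦ ?_⟩
  · rw [map_one, map_zero]
    exact (TwoSidedIdeal.mem_bot B).1 (h ▸ trivial)
  obtain ⟨⟨a, s⟩, hs : s • x = f a⟩ := IsLocalizedModule.surj S f.toLinearMap x
  obtain ⟨⟨b, t⟩, ht : t • y = f b⟩ := IsLocalizedModule.surj S f.toLinearMap y
  have mul_mul_eq_zero (r : A) : a * r * b = 0 := by
    have hxry : x * f r * y = 0 := hxy (f r)
    apply hf
    rw [map_mul, map_mul, ← hs, ← ht, smul_mul_assoc, smul_mul_assoc, mul_smul_comm, hxry,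
      smul_zero, smul_zero, map_zero]
  have eq_zero_of_smul (u : S) (z : B) (hz : u • z = f 0) : z = 0 :=
    IsLocalizedModule.smul_injective f.toLinearMap u (by simpa using hz)
  obtain rfl | rfl := hA.eq_zero_or_eq_zero mul_mul_eq_zero
  · exact .inl (eq_zero_of_smul s x hs)
  · exact .inr (eq_zero_of_smul t y ht)

lemma smul_mem_of_mem_twoSidedIdeal {J : TwoSidedIdeal A} (d : D) {x : A} (hx : x ∈ J) :
    d • x ∈ J := by
  rw [Algebra.smul_def]
  exact J.mul_mem_left _ _ hx

lemma exists_smul_eq_of_mem_map (S : Submonoid D) (f : A →ₐ[D] B)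
    [IsLocalizedModule S f.toLinearMap] {J : TwoSidedIdeal A} {y : B} (hy : y ∈ J.map f) :
    ∃ s : S, ∃ x ∈ J, s • y = f x := by
  have f_smul (s : S) (a : A) : f (s • a) = s • f a := map_smul f (s : D) a
  induction hy using TwoSidedIdeal.span_induction with
  | mem y hy =>
    obtain ⟨x, hx, rfl⟩ := hy
    exact ⟨1, x, hx, one_smul _ _⟩
  | zero => exact ⟨1, 0, J.zero_mem, by rw [smul_zero, map_zero]⟩
  | add y z _ _ hy hz =>
    obtain ⟨s, x, hx, hs⟩ := hy
    obtain ⟨t, w, hw, ht⟩ := hz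
    refine ⟨s * t, t • x + s • w, J.add_mem ?_ ?_, ?_⟩
    · exact smul_mem_of_mem_twoSidedIdeal (t : D) hx
    · exact smul_mem_of_mem_twoSidedIdeal (s : D) hw
    rw [map_add, f_smul, f_smul, ← hs, ← ht, smul_smul, smul_smul, mul_comm t, smul_add]
  | neg y _ hy =>
    obtain ⟨s, x, hx, hs⟩ := hy
    exact ⟨s, -x, J.neg_mem hx, by rw [smul_neg, hs, map_neg]⟩
  | left_absorb z y _ hy =>
    obtain ⟨s, x, hx, hs⟩ := hy
    obtain ⟨⟨a, t⟩, ht : t • z = f a⟩ := IsLocalizedModule.surj S f.toLinearMap z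
    exact ⟨t * s, a * x, J.mul_mem_left _ _ hx,
      by rw [map_mul, ← hs, ← ht, smul_mul_smul_comm]⟩
  | right_absorb z y _ hy =>
    obtain ⟨s, x, hx, hs⟩ := hy
    obtain ⟨⟨a, t⟩, ht : t • z = f a⟩ := IsLocalizedModule.surj S f.toLinearMap z
    exact ⟨s * t, x * a, J.mul_mem_right _ _ hx,
      by rw [map_mul, ← hs, ← ht, smul_mul_smul_comm]⟩

end Localization

section Contraction

variable {C R : Type*} [CommRing C] [Ring R] [Algebra C R]

lemma mem_contractTS {P : TwoSidedIdeal R} {c : C} :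
    c ∈ contractTS (C := C) P ↔ algebraMap C R c ∈ P :=
  Iff.rfl

lemma IsPrimeTS.algebraMap_mem_or_mem {P : TwoSidedIdeal R} (hP : IsPrimeTS P) {c : C} {a : R}
    (h : c • a ∈ P) : algebraMap C R c ∈ P ∨ a ∈ P := by
  refine hP.2 _ _ fun r ↦ ?_
  rw [Algebra.commutes, mul_assoc, ← Algebra.smul_def]
  exact P.mul_mem_left _ _ h

lemma IsPrimeTS.contractTS_isPrime {P : TwoSidedIdeal R} (hP : IsPrimeTS P) :
    (contractTS (C := C) P).IsPrime where
  ne_top' := by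
    rw [Ideal.ne_top_iff_one, mem_contractTS, map_one]
    exact hP.one_notMem
  mem_or_mem' := by
    intro x y hxy
    rw [mem_contractTS, map_mul, ← Algebra.smul_def] at hxy
    exact hP.algebraMap_mem_or_mem hxy

lemma ker_algebraMap_isMaximal_of_isSimpleRing [IsSimpleRing R] [Algebra.IsIntegral C R] :
    (RingHom.ker (algebraMap C R)).IsMaximal := by
  have : (⊥ : Ideal (Subalgebra.center C R)).IsMaximal :=
    Ring.isField_iff_maximal_bot.1 (IsSimpleRing.isField_center R)
  have center_isIntegral : Algebra.IsIntegral C (Subalgebra.center C R) :=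
    .of_injective (Subalgebra.center C R).val Subtype.val_injective
  have ker_eq : RingHom.ker (algebraMap C R) =
      Ideal.comap (algebraMap C (Subalgebra.center C R)) ⊥ := by
    ext c
    rw [RingHom.mem_ker, Ideal.mem_comap, Ideal.mem_bot, ← Subtype.val_inj]
    rfl
  rw [ker_eq]
  exact Ideal.isMaximal_comap_of_isIntegral_of_isMaximal' _ center_isIntegral.isIntegral _

lemma IsMaximalTS.contractTS_isMaximal [Algebra.IsIntegral C R] {M : TwoSidedIdeal R}
    (hM : IsMaximalTS M) : (contractTS (C := C) M).IsMaximal := by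
  have := hM.isSimpleRing_quotient
  have : Algebra.IsIntegral C (R ⧸ M.asIdeal) :=
    .of_surjective (Ideal.Quotient.mkₐ C M.asIdeal) Ideal.Quotient.mk_surjective
  have ker_eq : RingHom.ker (algebraMap C (R ⧸ M.asIdeal)) = contractTS M := by
    ext c
    exact Ideal.Quotient.eq_zero_iff_mem
  exact ker_eq ▸ ker_algebraMap_isMaximal_of_isSimpleRing

end Contraction

section Incomparability

open TensorProduct in
lemma exists_ne_zero_algebraMap_mem {D A : Type*} [CommRing D] [IsDomain D] [Ring A] [Algebra D A]
    [Module.Finite D A] (hinj : Function.Injective (algebraMap D A))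
    (hA : IsPrimeTS (⊥ : TwoSidedIdeal A)) {J : TwoSidedIdeal A} (hJ : J ≠ ⊥) :
    ∃ d : D, d ≠ 0 ∧ algebraMap D A d ∈ J := by
  let S := nonZeroDivisors D
  let f : A →ₐ[D] FractionRing D ⊗[D] A := Algebra.TensorProduct.includeRight
  have : IsLocalizedModule S f.toLinearMap :=
    inferInstanceAs (IsLocalizedModule S (TensorProduct.mk D (FractionRing D) A 1))
  have hf : Function.Injective f := by
    refine (injective_iff_map_eq_zero f).2 fun a ha ↦ ?_
    obtain ⟨s, hs : (s : D) • a = 0⟩ := (IsLocalizedModule.eq_zero_iff S f.toLinearMap).1 ha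
    refine (hA.algebraMap_mem_or_mem hs).resolve_left fun hs_zero ↦ ?_
    exact nonZeroDivisors.ne_zero s.2 ((map_eq_zero_iff _ hinj).1 hs_zero)
  have : IsArtinianRing (FractionRing D ⊗[D] A) := .of_finite (FractionRing D) _
  have : IsSimpleRing (FractionRing D ⊗[D] A) := (hA.bot_of_isLocalizedModule S f hf).isSimpleRing
  have map_eq_top : J.map f = ⊤ := by
    refine (eq_bot_or_eq_top (J.map f)).resolve_left fun h_bot ↦ hJ (eq_bot_iff.2 fun x hx ↦ ?_)
    have hfx : f x ∈ J.map f := TwoSidedIdeal.subset_span ⟨x, hx, rfl⟩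
    rw [h_bot, TwoSidedIdeal.mem_bot] at hfx
    exact (map_eq_zero_iff f hf).1 hfx
  obtain ⟨s, x, hx, hs⟩ := exists_smul_eq_of_mem_map S f (map_eq_top ▸ trivial : 1 ∈ J.map f)
  refine ⟨s, nonZeroDivisors.ne_zero s.2, ?_⟩
  have : algebraMap D A s = x := hf (by rw [f.commutes, Algebra.algebraMap_eq_smul_one]; exact hs)
  rwa [this]

variable {C R : Type*} [CommRing C] [Ring R] [Algebra C R] [Module.Finite C R]

lemma IsPrimeTS.contractTS_lt_contractTS {P Q : TwoSidedIdeal R} (hP : IsPrimeTS P) (hPQ : P < Q) :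
    contractTS (C := C) P < contractTS Q := by
  have : (P.asIdeal.comap (algebraMap C R)).IsPrime := hP.contractTS_isPrime
  have : IsScalarTower C (C ⧸ P.asIdeal.comap (algebraMap C R)) (R ⧸ P.asIdeal) :=
    .of_algebraMap_eq fun _ ↦ rfl
  have : Module.Finite (C ⧸ P.asIdeal.comap (algebraMap C R)) (R ⧸ P.asIdeal) :=
    .of_restrictScalars_finite C _ _
  let J : TwoSidedIdeal (R ⧸ P.asIdeal) :=
    (Ideal.map (Ideal.Quotient.mk P.asIdeal) Q.asIdeal).toTwoSided
  have mk_mem_J (x : R) : Ideal.Quotient.mk P.asIdeal x ∈ J ↔ x ∈ Q := by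
    rw [Ideal.mem_toTwoSided, ← Ideal.mem_comap, Ideal.comap_map_mk hPQ.le,
      TwoSidedIdeal.mem_asIdeal]
  obtain ⟨x, hxQ, hxP⟩ := SetLike.exists_of_lt hPQ
  have hJ : J ≠ ⊥ := fun h ↦ by
    have := (mk_mem_J x).2 hxQ
    rw [h, TwoSidedIdeal.mem_bot, Ideal.Quotient.eq_zero_iff_mem] at this
    exact hxP this
  obtain ⟨d, hd, hdJ⟩ :=
    exists_ne_zero_algebraMap_mem (D := C ⧸ P.asIdeal.comap (algebraMap C R))
      Ideal.algebraMap_quotient_injective hP.bot_quotient hJ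
  obtain ⟨c, rfl⟩ := Ideal.Quotient.mk_surjective d
  refine SetLike.lt_iff_le_and_exists.2 ⟨fun _ hc ↦ hPQ.le hc, c, (mk_mem_J _).1 hdJ, ?_⟩
  exact fun hc ↦ hd (Ideal.Quotient.eq_zero_iff_mem.2 hc)

lemma tsHeight_le_cHeight_contractTS (P : TwoSidedIdeal R) :
    tsHeight P ≤ cHeight (contractTS (C := C) P) :=
  primeChainHeight_le_primeChainHeight_apply contractTS (fun _ hQ ↦ hQ.contractTS_isPrime)
    (fun _ _ hQ ↦ hQ.contractTS_lt_contractTS) P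

variable (C R) in
lemma tsKdim_le_cKdim : tsKdim R ≤ cKdim C :=
  iSup_le fun P ↦ (tsHeight_le_cHeight_contractTS (C := C) P.1).trans <|
    le_iSup (fun p : {p : Ideal C // p.IsPrime} ↦ cHeight p.1)
      ⟨contractTS P.1, P.2.contractTS_isPrime⟩

end Incomparability

section RegularSequences

variable {C R : Type*} [CommRing C] [Ring R] [Algebra C R]

lemma IsPrimeTS.isMSystem_pow_smul {P : TwoSidedIdeal R} (hP : IsPrimeTS P) (c : C) :
    IsMSystem {x : R | ∃ n : ℕ, ∃ t ∉ P, c ^ n • t = x} := by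
  refine ⟨⟨1, 0, 1, hP.one_notMem, by rw [pow_zero, one_smul]⟩, ?_⟩
  rintro _ ⟨m, s, hs, rfl⟩ _ ⟨n, t, ht, rfl⟩
  obtain ⟨r, hr⟩ : ∃ r, s * r * t ∉ P := by
    by_contra! h
    exact (hP.2 s t h).elim hs ht
  exact ⟨r, m + n, s * r * t, hr, by rw [smul_mul_assoc, smul_mul_smul_comm, pow_add]⟩

lemma IsPrimeTS.exists_isPrimeTS_ge_lt {I P : TwoSidedIdeal R} (hP : IsPrimeTS P) (hIP : I ≤ P)
    {c : C} (hc : algebraMap C R c ∈ P) (hreg : ∀ r : R, c • r ∈ I → r ∈ I) :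
    ∃ Q, IsPrimeTS Q ∧ I ≤ Q ∧ Q < P := by
  have mem_of_pow_smul_mem (n : ℕ) (t : R) (h : c ^ n • t ∈ I) : t ∈ I := by
    induction n with
    | zero => rwa [pow_zero, one_smul] at h
    | succ n ih => exact ih (hreg _ (by rwa [pow_succ', mul_smul] at h))
  obtain ⟨Q, hQ, hIQ, hdisj⟩ := (hP.isMSystem_pow_smul c).exists_isPrimeTS_ge_disjoint (I := I) <|
    Set.disjoint_right.2 <| by
      rintro _ ⟨n, t, ht, rfl⟩ hI
      exact ht (hIP (mem_of_pow_smul_mem n t hI))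
  have mem_P_of_pow_smul_mem (n : ℕ) (t : R) (h : c ^ n • t ∈ Q) : t ∈ P := by
    by_contra ht
    exact Set.disjoint_left.1 hdisj h ⟨n, t, ht, rfl⟩
  have hQP : Q ≤ P := fun t ht ↦ mem_P_of_pow_smul_mem 0 t (by rwa [pow_zero, one_smul])
  have hcQ : algebraMap C R c ∉ Q := fun h ↦
    hP.one_notMem (mem_P_of_pow_smul_mem 1 1 (by rwa [pow_one, ← Algebra.algebraMap_eq_smul_one]))
  exact ⟨Q, hQ, hIQ, SetLike.lt_iff_le_and_exists.2 ⟨hQP, _, hc, hcQ⟩⟩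

variable (R) in
/-- The extension `I R` to `R` of an ideal `I` of `C`, with the submodule `I • ⊤` as its carrier so
that `R ⧸ I R` is the module in the definition of a regular sequence. -/
def extendTS (I : Ideal C) : TwoSidedIdeal R :=
  .mk' (I • ⊤ : Submodule C R) (zero_mem _) add_mem neg_mem
    (fun {x y} hy ↦ by
      have : I • ⊤ ≤ (I • ⊤ : Submodule C R).comap (LinearMap.mulLeft C x) :=
        Submodule.smul_le.2 fun c hc r _ ↦ by
          rw [Submodule.mem_comap, LinearMap.mulLeft_apply, mul_smul_comm]
          exact Submodule.smul_mem_smul hc trivial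
      exact this hy)
    (fun {x y} hx ↦ by
      have : I • ⊤ ≤ (I • ⊤ : Submodule C R).comap (LinearMap.mulRight C y) :=
        Submodule.smul_le.2 fun c hc r _ ↦ by
          rw [Submodule.mem_comap, LinearMap.mulRight_apply, smul_mul_assoc]
          exact Submodule.smul_mem_smul hc trivial
      exact this hx)

lemma mem_extendTS {I : Ideal C} {x : R} : x ∈ extendTS R I ↔ x ∈ (I • ⊤ : Submodule C R) :=
  TwoSidedIdeal.mem_mk' ..

lemma extendTS_le_iff_le_contractTS {I : Ideal C} {P : TwoSidedIdeal R} :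
    extendTS R I ≤ P ↔ I ≤ contractTS P := by
  refine ⟨fun h c hc ↦ h (mem_extendTS.2 ?_), fun h x hx ↦ ?_⟩
  · rw [Algebra.algebraMap_eq_smul_one]
    exact Submodule.smul_mem_smul hc trivial
  · rw [mem_extendTS] at hx
    induction hx using Submodule.smul_induction_on' with
    | smul c hc r _ =>
      rw [Algebra.smul_def]
      exact P.mul_mem_right _ _ (h hc)
    | add x _ y _ hx hy => exact P.add_mem hx hy

lemma IsPrimeTS.length_le_tsHeight {P : TwoSidedIdeal R} (hP : IsPrimeTS P) {rs : List C}
    (hreg : RingTheory.Sequence.IsWeaklyRegular R rs) (hrs : ∀ c ∈ rs, c ∈ contractTS P) :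
    rs.length ≤ tsHeight P := by
  induction rs using List.reverseRecOn generalizing P with
  | nil => exact zero_le
  | append_singleton rs c ih =>
    rw [RingTheory.Sequence.isWeaklyRegular_append_iff,
      RingTheory.Sequence.isWeaklyRegular_singleton_iff,
      isSMulRegular_quotient_iff_mem_of_smul_mem] at hreg
    obtain ⟨rs_reg, c_reg⟩ := hreg
    simp only [List.forall_mem_append, List.forall_mem_singleton] at hrs
    obtain ⟨Q, hQ, hle, hQP⟩ := hP.exists_isPrimeTS_ge_lt (I := extendTS R (Ideal.ofList rs))
      (extendTS_le_iff_le_contractTS.2 (Ideal.span_le.2 hrs.1)) hrs.2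
      (fun r hr ↦ mem_extendTS.2 (c_reg r (mem_extendTS.1 hr)))
    have rs_mem : ∀ d ∈ rs, d ∈ contractTS Q := fun d hd ↦
      extendTS_le_iff_le_contractTS.1 hle (Ideal.subset_span hd)
    calc ((rs ++ [c]).length : ℕ∞) = rs.length + 1 := by simp
      _ ≤ tsHeight Q + 1 := by gcongr; exact ih hQ rs_reg rs_mem
      _ ≤ tsHeight P := hQ.tsHeight_add_one_le hP hQP

lemma IsPrimeTS.cGrade_contractTS_le_tsHeight {P : TwoSidedIdeal R} (hP : IsPrimeTS P) :
    cGrade (contractTS (C := C) P) R ≤ tsHeight P := by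
  refine sSup_le ?_
  rintro _ ⟨rs, rfl, rs_mem, rs_reg⟩
  exact hP.length_le_tsHeight rs_reg.toIsWeaklyRegular rs_mem

end RegularSequences

theorem equicodimensional_of_CMacaulay_general {C R : Type*} [CommRing C] [Ring R] [Algebra C R]
    [Module.Finite C R] (hCM : IsMaximalCohenMacaulay C R)
    (hequi : ∀ m : Ideal C, m.IsMaximal → cHeight m = cKdim C)
    (M : TwoSidedIdeal R) (hM : IsMaximalTS M) : tsHeight M = tsKdim R := by
  have hm : (contractTS (C := C) M).IsMaximal := hM.contractTS_isMaximal
  apply le_antisymm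
  · exact le_iSup (fun P : {P : TwoSidedIdeal R // IsPrimeTS P} ↦ tsHeight P.1) ⟨M, hM.isPrimeTS⟩
  · calc tsKdim R ≤ cKdim C := tsKdim_le_cKdim C R
      _ = cHeight (contractTS (C := C) M) := (hequi _ hm).symm
      _ = cGrade (contractTS (C := C) M) R := (hCM _ hm).symm
      _ ≤ tsHeight M := hM.isPrimeTS.cGrade_contractTS_le_tsHeight

/-- Let `R` be a noetherian ring which is a finitely generated module over a central
subring `C`, and suppose `R` is a maximal Cohen-Macaulay `C`-module (`C`-Macaulay).
If `C` is equicodimensional, then `R` is equicodimensional: every maximal (two-sided)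
ideal of `R` has height equal to `Kdim R`. -/
theorem equicodimensional_of_CMacaulay {C R : Type*} [CommRing C] [IsNoetherianRing C]
    [Ring R] [Algebra C R] (hinj : Function.Injective (algebraMap C R))
    [Module.Finite C R]
    (hCM : IsMaximalCohenMacaulay C R)
    (hequi : ∀ m : Ideal C, m.IsMaximal → cHeight m = cKdim C) :
    ∀ M : TwoSidedIdeal R, IsMaximalTS M → tsHeight M = tsKdim R :=
  equicodimensional_of_CMacaulay_general hCM hequi
end

section
/- Let R be a noetherian ring which is a finite module over its center Z(R) and which is Z(R)-Macaulay. Then every annihilator prime of R (as a right module over itself) is a minimal prime, and consequently R has an artinian classical quotient ring. -/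
/-- An element of a ring is regular if it is neither a left nor a right zero divisor. -/
def IsRegularElem {R : Type*} [Ring R] (s : R) : Prop :=
  (∀ x : R, s * x = 0 → x = 0) ∧ (∀ x : R, x * s = 0 → x = 0)

universe u

universe v

/-!
Let `C` be the centre of `R`. By Formanek's generalization of the Eakin–Nagata theorem, `C` is
noetherian. If `p` is an associated prime of the `C`-module `R` and `x` is an `R`-regular element of
a prime `m ⊇ p`, then `R / xR` has an associated prime `q` with `p < q ≤ m`. Iterating along a
regular sequence gives `ht p + G(m, R) ≤ ht m`, so the Macaulay condition forces `ht p = 0`.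

Let `S` be the set of `R`-regular elements of `C`. A prime of `C` disjoint from `S` lies in an
associated prime of `R`, hence is minimal; so `S⁻¹C` is artinian, and with it `S⁻¹R`. Prime ideals
of an artinian ring are maximal, so a prime of `R` whose contraction is disjoint from `S`, such as
an annihilator prime, is minimal. A regular element of `R` is a nonzerodivisor, hence a unit, of
`S⁻¹R`, which is therefore the classical quotient ring.
-/

section CentralSubring

open scoped Pointwise

variable {C M : Type*} [CommRing C] [AddCommGroup M] [Module C M]

theorem mem_annihilator_quotient_iff_smul_top_le {N : Submodule C M} {a : C} :
    a ∈ Module.annihilator C (M ⧸ N) ↔ a • (⊤ : Submodule C M) ≤ N := by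
  rw [Submodule.annihilator_quotient, Submodule.mem_colon]
  exact ⟨fun h _ ⟨m, _, hm⟩ => hm ▸ h m trivial,
    fun h m _ => h (Submodule.smul_mem_pointwise_smul m a ⊤ trivial)⟩

-- Formanek's device: `M ⧸ N` has the same annihilator as `M`, while each of its proper quotients
-- has a larger one.
theorem exists_maximal_annihilator_quotient_le [Module.Finite C M] :
    ∃ N : Submodule C M,
      Maximal (fun L => Module.annihilator C (M ⧸ L) ≤ Module.annihilator C M) N := by
  refine (zorn_le_nonempty₀ {L : Submodule C M | Module.annihilator C (M ⧸ L) ≤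
    Module.annihilator C M} ?_ ⊥ ?_).imp fun N hN => hN.2
  · intro c hc hchain L hL
    refine ⟨sSup c, fun a ha => ?_, fun _ => le_sSup⟩
    have hcompact : IsCompactElement (a • (⊤ : Submodule C M)) :=
      (Submodule.fg_iff_compact _).mp (Module.Finite.fg_top.map _)
    obtain ⟨K, hK, haK⟩ := (CompleteLattice.isCompactElement_iff_le_of_directed_sSup_le _ _).mp
      hcompact c ⟨L, hL⟩ hchain.directedOn (mem_annihilator_quotient_iff_smul_top_le.mp ha)
    exact hc hK (mem_annihilator_quotient_iff_smul_top_le.mpr haK)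
  · exact (Submodule.quotEquivOfEqBot _ rfl).annihilator_eq.le

theorem isNoetherianRing_quotient_annihilator [IsNoetherian C M] :
    IsNoetherianRing (C ⧸ Module.annihilator C M) := by
  obtain ⟨n, g, hg⟩ := Module.Finite.exists_fin (R := C) (M := M)
  let φ : C →ₗ[C] (Fin n → M) := LinearMap.pi fun i => LinearMap.toSpanSingleton C M (g i)
  have hker : LinearMap.ker φ = Module.annihilator C M := by
    ext a
    rw [← Submodule.annihilator_top, ← hg, Submodule.mem_annihilator_span]
    simp [φ, funext_iff]
  have : IsNoetherian C (C ⧸ Module.annihilator C M) :=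
    hker ▸ isNoetherian_of_linearEquiv φ.quotKerEquivRange.symm
  exact isNoetherian_of_tower C this

theorem isNoetherian_of_isNoetherianRing_quotient [Module.Finite C M] {I : Ideal C}
    (hI : I ≤ Module.annihilator C M) [IsNoetherianRing (C ⧸ I)] : IsNoetherian C M := by
  have hM : Module.IsTorsionBySet C M I := fun m a => Module.mem_annihilator.mp (hI a.2) m
  let := hM.module
  have : IsScalarTower C (C ⧸ I) M := hM.isScalarTower
  have : Module.Finite (C ⧸ I) M := .of_restrictScalars_finite C _ M
  exact (LinearMap.isNoetherian_iff_of_bijective hM.semilinearMap Function.bijective_id).mpr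
    inferInstance

theorem isNoetherian_quotient_of_maximal [Module.Finite C M]
    (h : ∀ a ∉ Module.annihilator C M, IsNoetherian C (QuotSMulTop a M)) {N : Submodule C M}
    (hN : Maximal (fun L => Module.annihilator C (M ⧸ L) ≤ Module.annihilator C M) N) :
    IsNoetherian C (M ⧸ N) := by
  refine ⟨fun L => ?_⟩
  rcases eq_bot_or_bot_lt L with rfl | hL
  · exact Submodule.fg_bot
  have hlt : N < L.comap N.mkQ := by
    simpa using (Submodule.comap_strictMono_of_surjective N.mkQ_surjective) hL
  obtain ⟨a, haL, ha⟩ := SetLike.not_le_iff_exists.mp (hN.not_prop_of_gt hlt)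
  rw [mem_annihilator_quotient_iff_smul_top_le, ← Submodule.map_le_iff_le_comap,
    Submodule.map_pointwise_smul, Submodule.map_top, Submodule.range_mkQ] at haL
  have := h a ha
  have : IsNoetherian C (QuotSMulTop a (M ⧸ N)) :=
    isNoetherian_of_surjective (QuotSMulTop.map a N.mkQ)
      (LinearMap.range_eq_top.mpr (QuotSMulTop.map_surjective a N.mkQ_surjective))
  refine Submodule.fg_of_fg_map_of_fg_inf_ker (a • (⊤ : Submodule C (M ⧸ N))).mkQ
    (IsNoetherian.noetherian _) ?_
  rw [Submodule.ker_mkQ, inf_eq_right.mpr haL]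
  exact Module.Finite.fg_top.map _

theorem isNoetherian_of_isNoetherian_quotSMulTop [Module.Finite C M]
    (h : ∀ a ∉ Module.annihilator C M, IsNoetherian C (QuotSMulTop a M)) : IsNoetherian C M := by
  obtain ⟨N, hN⟩ := exists_maximal_annihilator_quotient_le (C := C) (M := M)
  have := isNoetherian_quotient_of_maximal h hN
  have := isNoetherianRing_quotient_annihilator (C := C) (M := M ⧸ N)
  exact isNoetherian_of_isNoetherianRing_quotient hN.prop

theorem isNoetherian_of_isNoetherian_of_finite {R : Type*} [Ring R] [Algebra C R]
    [Module R M] [IsScalarTower C R M] [Module.Finite C M]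
    [IsNoetherian R M] : IsNoetherian C M := by
  suffices ∀ L : Submodule R M, IsNoetherian C (M ⧸ L.restrictScalars C) from
    have := this ⊥
    isNoetherian_of_linearEquiv (Submodule.quotEquivOfEqBot _ (Submodule.restrictScalars_bot C R M))
  intro L
  induction L using IsNoetherian.induction with | _ L ih
  refine isNoetherian_of_isNoetherian_quotSMulTop fun a ha => ?_
  rw [mem_annihilator_quotient_iff_smul_top_le] at ha
  have := ih (L ⊔ a • ⊤) (left_lt_sup.mpr ha)
  have hsup : (L ⊔ a • ⊤).restrictScalars C = L.restrictScalars C ⊔ a • ⊤ :=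
    Submodule.restrictScalars_sup C _ _
  rw [hsup] at this
  refine isNoetherian_of_linearEquiv
    ((Submodule.quotientQuotientEquivQuotientSup (L.restrictScalars C) (a • ⊤)).symm ≪≫ₗ
      Submodule.quotEquivOfEq _ _ ?_)
  rw [Submodule.map_pointwise_smul, Submodule.map_top, Submodule.range_mkQ]

theorem isNoetherianRing_of_faithfulSMul_of_finite (C R : Type*) [CommRing C] [Ring R]
    [Algebra C R] [FaithfulSMul C R] [Module.Finite C R] [IsNoetherianRing R] :
    IsNoetherianRing C :=
  have : IsNoetherian C R := isNoetherian_of_isNoetherian_of_finite (R := R)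
  isNoetherian_of_injective (Algebra.linearMap C R) (FaithfulSMul.algebraMap_injective C R)

end CentralSubring

section AssociatedPrimes

variable {C M : Type*} [CommRing C] [AddCommGroup M] [Module C M]

theorem quotSMulTop_map_subtype_injective {N : Submodule C M} {x : C}
    (hx : IsSMulRegular (M ⧸ N) x) : Function.Injective (QuotSMulTop.map x N.subtype) := by
  have hexact : Function.Exact (0 : N →ₗ[C] N) N.subtype :=
    LinearMap.exact_zero_iff_injective _ _ |>.mpr N.subtype_injective
  have := QuotSMulTop.map_first_exact_on_four_term_exact_of_isSMulRegular_last hexact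
    (LinearMap.exact_subtype_mkQ N) hx
  rw [map_zero] at this
  exact (LinearMap.exact_zero_iff_injective _ _).mp this

theorem isSMulRegular_quotient_torsionBySet {x : C} (hx : IsSMulRegular M x) (s : Set C) :
    IsSMulRegular (M ⧸ Submodule.torsionBySet C M s) x := by
  refine (isSMulRegular_on_quot_iff_lsmul_comap_le _ _).mpr fun u hu => ?_
  rw [Submodule.mem_torsionBySet_iff]
  intro a
  have hxu : (a : C) • x • u = 0 := (Submodule.mem_torsionBySet_iff _ _).mp hu a
  exact hx.right_eq_zero_of_smul (smul_comm (a : C) x u ▸ hxu)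

theorem mem_support_torsionBySet_of_isAssociatedPrime [IsNoetherianRing C] {p m : Ideal C}
    [m.IsPrime] (hp : IsAssociatedPrime p M) (hpm : p ≤ m) :
    ⟨m, inferInstance⟩ ∈ Module.support C (Submodule.torsionBySet C M p) := by
  obtain ⟨-, v, hv⟩ := isAssociatedPrime_iff.mp hp
  have mem_iff (a : C) : a ∈ p ↔ a • v = 0 := by
    rw [hv, Submodule.mem_colon_singleton, Submodule.mem_bot]
  refine Module.mem_support_iff'.mpr ⟨⟨v, ?_⟩, fun a ha h0 => ?_⟩
  · exact (Submodule.mem_torsionBySet_iff _ _).mpr fun a => (mem_iff a).mp a.2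
  · exact ha (hpm ((mem_iff a).mpr (congrArg Subtype.val h0)))

theorem notMem_of_isAssociatedPrime_of_isSMulRegular [IsNoetherianRing C] {p : Ideal C} {x : C}
    (hp : IsAssociatedPrime p M) (hx : IsSMulRegular M x) : x ∉ p := by
  have := Set.subset_iUnion₂ (s := fun (p : Ideal C) (_ : p ∈ associatedPrimes C M) => (p : Set C))
    p hp
  rw [biUnion_associatedPrimes_eq_zero_divisors] at this
  intro hxp
  obtain ⟨v, hv, hxv⟩ := this hxp
  exact hv (hx.right_eq_zero_of_smul hxv)

theorem exists_isAssociatedPrime_quotSMulTop [IsNoetherianRing C] [Module.Finite C M]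
    {p m : Ideal C} [m.IsPrime] (hp : IsAssociatedPrime p M) (hpm : p ≤ m) {x : C} (hxm : x ∈ m)
    (hx : IsSMulRegular M x) :
    ∃ q, IsAssociatedPrime q (QuotSMulTop x M) ∧ p < q ∧ q ≤ m := by
  let N := Submodule.torsionBySet C M p
  have hsupp : ⟨m, inferInstance⟩ ∈ Module.support C (QuotSMulTop x N) := by
    rw [Module.support_quotSMulTop]
    exact ⟨mem_support_torsionBySet_of_isAssociatedPrime hp hpm,
      Set.singleton_subset_iff.mpr hxm⟩
  obtain ⟨q, hq, hqm⟩ :=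
    Ideal.exists_minimalPrimes_le (Module.annihilator_le_of_mem_support hsupp)
  have hqN : IsAssociatedPrime q (QuotSMulTop x N) :=
    Module.associatedPrimes.minimalPrimes_annihilator_subset_associatedPrimes C _ hq
  have hpN : p ≤ Module.annihilator C N := fun a ha => Module.mem_annihilator.mpr fun v =>
    Subtype.ext ((Submodule.mem_torsionBySet_iff _ _).mp v.2 ⟨a, ha⟩)
  have hNquot : Module.annihilator C N ≤ Module.annihilator C (QuotSMulTop x N) :=
    LinearMap.annihilator_le_of_surjective _ (Submodule.mkQ_surjective _)
  refine ⟨q, hqN.map_of_injective _ (quotSMulTop_map_subtype_injective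
    (isSMulRegular_quotient_torsionBySet hx _)),
    lt_of_le_of_ne (hpN.trans (hNquot.trans hq.1.2)) ?_, hqm⟩
  rintro rfl
  exact notMem_of_isAssociatedPrime_of_isSMulRegular hp hx
    (hq.1.2 (QuotSMulTop.mem_annihilator N x))

theorem height_add_length_le_of_isWeaklyRegular [IsNoetherianRing C] [Module.Finite C M]
    {p m : Ideal C} [m.IsPrime] (hp : IsAssociatedPrime p M) (hpm : p ≤ m) {rs : List C}
    (hmem : ∀ x ∈ rs, x ∈ m) (hrs : RingTheory.Sequence.IsWeaklyRegular M rs) :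
    p.height + rs.length ≤ m.height := by
  induction rs generalizing M p with
  | nil => simpa using Ideal.height_mono hpm
  | cons x rs ih =>
    rw [RingTheory.Sequence.isWeaklyRegular_cons_iff] at hrs
    obtain ⟨hxm, hmem⟩ := List.forall_mem_cons.mp hmem
    obtain ⟨q, hq, hpq, hqm⟩ := exists_isAssociatedPrime_quotSMulTop hp hpm hxm hrs.1
    have := hp.isPrime
    have := hq.isPrime
    calc p.height + (x :: rs).length = p.height + 1 + rs.length := by
          rw [List.length_cons, Nat.cast_add_one, add_right_comm, add_assoc]
      _ ≤ q.height + rs.length := by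
          gcongr
          exact Ideal.height_add_one_le_of_lt_of_isPrime hpq
      _ ≤ m.height := ih hq hqm hmem hrs.2

theorem height_add_cGrade_le [IsNoetherianRing C] [Module.Finite C M] {p m : Ideal C}
    [m.IsPrime] (hp : IsAssociatedPrime p M) (hpm : p ≤ m) :
    p.height + cGrade m M ≤ m.height := by
  rw [cGrade]
  rcases Set.eq_empty_or_nonempty {n : ℕ∞ | ∃ rs : List C, n = rs.length ∧ (∀ x ∈ rs, x ∈ m) ∧
    RingTheory.Sequence.IsRegular M rs} with hempty | hne
  · simpa [hempty] using Ideal.height_mono hpm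
  · rw [ENat.add_sSup hne]
    refine iSup₂_le ?_
    rintro _ ⟨rs, rfl, hmem, hrs⟩
    exact height_add_length_le_of_isWeaklyRegular hp hpm hmem hrs.toIsWeaklyRegular

theorem height_le_cHeight (p : PrimeSpectrum C) : p.asIdeal.height ≤ cHeight p.asIdeal := by
  rw [PrimeSpectrum.height_eq_orderHeight, Order.height_eq_iSup_last_eq]
  refine iSup₂_le fun c hc => le_sSup ?_
  exact ⟨c.length, rfl, fun i => (c i).asIdeal, c.strictMono, fun i => (c i).isPrime,
    congrArg PrimeSpectrum.asIdeal hc⟩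

theorem mem_minimalPrimes_of_isAssociatedPrime [IsNoetherianRing C] [Module.Finite C M]
    (hCM : IsMaximalCohenMacaulay C M) {p : Ideal C} (hp : IsAssociatedPrime p M) :
    p ∈ minimalPrimes C := by
  have := hp.isPrime
  obtain ⟨m, hm, hpm⟩ := p.exists_le_maximal hp.isPrime.ne_top
  have hle : p.height + m.height ≤ m.height := calc
    p.height + m.height ≤ p.height + cGrade m M := by
      gcongr
      exact (height_le_cHeight ⟨m, hm.isPrime⟩).trans (hCM m hm).ge
    _ ≤ m.height := height_add_cGrade_le hp hpm
  have hzero : p.height ≤ 0 :=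
    (ENat.add_le_add_iff_right (Ideal.height_ne_top hm.ne_top)).mp (by rwa [zero_add])
  exact Ideal.height_eq_zero_iff.mp (nonpos_iff_eq_zero.mp hzero)

end AssociatedPrimes

section Localization

variable {C M : Type*} [CommRing C] [AddCommGroup M] [Module C M]

theorem exists_isAssociatedPrime_ge_of_disjoint_nonZeroSMulDivisors [IsNoetherianRing C]
    [Module.Finite C M] {p : Ideal C}
    (hp : Disjoint (nonZeroSMulDivisors C M : Set C) (p : Set C)) :
    ∃ q, IsAssociatedPrime q M ∧ p ≤ q := by
  refine (Ideal.subset_union_prime_finite (associatedPrimes.finite C M) 0 0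
    fun q hq _ _ => hq.isPrime).mp fun a ha => ?_
  rw [biUnion_associatedPrimes_eq_compl_regular, Set.mem_compl_iff, Set.mem_ofPred_eq,
    isSMulRegular_iff_mem_nonZeroSMulDivisors]
  exact fun haS => hp.notMem_of_mem_left haS ha

theorem krullDimLE_zero_of_forall_disjoint_mem_minimalPrimes (S : Submonoid C)
    (hS : ∀ p : Ideal C, p.IsPrime → Disjoint (S : Set C) (p : Set C) → p ∈ minimalPrimes C)
    (A : Type*) [CommRing A] [Algebra C A] [IsLocalization S A] : Ring.KrullDimLE 0 A := by
  refine Ring.KrullDimLE.mk₀ fun I hI => ?_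
  obtain ⟨m, hm, hIm⟩ := I.exists_le_maximal hI.ne_top
  have hcomap {J : Ideal A} (hJ : J.IsPrime) : (J.under C).IsPrime ∧
      Disjoint (S : Set C) (J.under C : Set C) :=
    (IsLocalization.isPrime_iff_isPrime_disjoint S A J).mp hJ
  obtain ⟨hmprime, hmS⟩ := hcomap hm.isPrime
  have hle : m.under C ≤ I.under C :=
    (hS _ hmprime hmS).2 ⟨(hcomap hI).1, bot_le⟩ (Ideal.comap_mono hIm)
  have : m ≤ I := by
    rw [← IsLocalization.map_under S A m, ← IsLocalization.map_under S A I]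
    exact Ideal.map_mono hle
  exact le_antisymm hIm this ▸ hm

theorem isArtinianRing_localization_nonZeroSMulDivisors [IsNoetherianRing C] [Module.Finite C M]
    (hM : ∀ p, IsAssociatedPrime p M → p ∈ minimalPrimes C) :
    IsArtinianRing (Localization (nonZeroSMulDivisors C M)) := by
  refine isArtinianRing_iff_isNoetherianRing_krullDimLE_zero.mpr
    ⟨IsLocalization.isNoetherianRing (nonZeroSMulDivisors C M) _ inferInstance,
      krullDimLE_zero_of_forall_disjoint_mem_minimalPrimes (nonZeroSMulDivisors C M)
        (fun p hp hdisj => ?_) _⟩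
  obtain ⟨q, hq, hpq⟩ := exists_isAssociatedPrime_ge_of_disjoint_nonZeroSMulDivisors hdisj
  have hqp : q ≤ p := (hM q hq).2 ⟨hp, bot_le⟩ hpq
  exact le_antisymm hpq hqp ▸ hM q hq

end Localization

section PrimeIdeals

variable {R : Type*} [Ring R]

theorem IsPrimeTS.le_of_pow_le {Q : TwoSidedIdeal R} (hQ : IsPrimeTS Q) {I : Ideal R} {n : ℕ}
    (hI : I ^ n ≤ Q.asIdeal) : I ≤ Q.asIdeal := by
  induction n with
  | zero =>
    rw [Submodule.pow_zero, Ideal.one_eq_top] at hI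
    exact absurd (eq_top_iff.mpr fun x _ => hI trivial) hQ.1
  | succ n ih =>
    by_cases hIQ : I ≤ Q.asIdeal
    · exact hIQ
    obtain ⟨b, hb, hbQ⟩ := SetLike.not_le_iff_exists.mp hIQ
    refine ih fun a ha => (hQ.2 a b fun r => hI ?_).resolve_right hbQ
    rw [mul_assoc, Submodule.pow_succ]
    exact Ideal.mul_mem_mul ha (I.mul_mem_left r hb)

theorem IsPrimeTS.jacobson_le [IsArtinianRing R] {Q : TwoSidedIdeal R} (hQ : IsPrimeTS Q) :
    Ring.jacobson R ≤ Q.asIdeal := by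
  obtain ⟨n, hn⟩ := IsSemiprimaryRing.isNilpotent (R := R)
  exact hQ.le_of_pow_le (hn.trans_le bot_le)

theorem IsPrimeTS.eq_of_le [IsArtinianRing R] {Q P : TwoSidedIdeal R} (hQ : IsPrimeTS Q)
    (hP : P ≠ ⊤) (hQP : Q ≤ P) : Q = P := by
  let π := Ideal.Quotient.mk (Ring.jacobson R)
  obtain ⟨L, hL⟩ := exists_isCompl (P.asIdeal.map π)
  let K := L.comap π
  have hPK {x y : R} (hx : x ∈ P) (hy : y ∈ K) : x * y ∈ Ring.jacobson R := by
    rw [← Ideal.Quotient.eq_zero_iff_mem, ← Ideal.mem_bot, ← hL.inf_eq_bot]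
    refine ⟨Ideal.mem_map_of_mem _ (P.mul_mem_right x y hx), ?_⟩
    exact K.mul_mem_left x hy
  by_contra hne
  obtain ⟨x, hx, hxQ⟩ := SetLike.exists_of_lt (lt_of_le_of_ne hQP hne)
  have hKP : K ≤ P.asIdeal := fun y hy =>
    hQP <| (hQ.2 x y fun r => hQ.jacobson_le (hPK (P.mul_mem_right x r hx) hy)).resolve_left hxQ
  have hmap : P.asIdeal.map π = ⊤ := by
    have hLP : L ≤ P.asIdeal.map π :=
      (Ideal.map_comap_of_surjective π Ideal.Quotient.mk_surjective L).ge.trans (Ideal.map_mono hKP)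
    rw [← hL.sup_eq_top, sup_eq_left.mpr hLP]
  have hker : RingHom.ker π ≤ P.asIdeal := by
    rw [Ideal.mk_ker]
    exact hQ.jacobson_le.trans hQP
  have htop := Ideal.comap_map_of_surjective' π Ideal.Quotient.mk_surjective P.asIdeal
  rw [hmap, Ideal.comap_top, sup_eq_left.mpr hker] at htop
  exact hP (eq_top_iff.mpr htop.le)

end PrimeIdeals

section LocalizedAlgebra

variable {C R T : Type*} [CommRing C] [Ring R] [Ring T] [Algebra C R] [Algebra C T]

theorem smul_mem_twoSidedIdeal {I : TwoSidedIdeal R} {x : R} (hx : x ∈ I) (c : C) : c • x ∈ I :=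
  Algebra.smul_def c x ▸ I.mul_mem_left _ _ hx

theorem IsPrimeTS.mem_of_smul_mem {P : TwoSidedIdeal R} (hP : IsPrimeTS P) {c : C} {x : R}
    (hc : c ∉ (contractTS P : Ideal C)) (hx : c • x ∈ P) : x ∈ P := by
  refine (hP.2 (algebraMap C R c) x fun r => ?_).resolve_left hc
  rw [Algebra.commutes, mul_assoc, ← Algebra.smul_def]
  exact P.mul_mem_left _ _ hx

theorem isRegularElem_algebraMap {s : C} (hs : IsSMulRegular R s) :
    IsRegularElem (algebraMap C R s) :=
  ⟨fun x hx => hs.right_eq_zero_of_smul (Algebra.smul_def s x ▸ hx), fun x hx =>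
    hs.right_eq_zero_of_smul ((Algebra.smul_def s x).trans ((Algebra.commutes s x).trans hx))⟩

theorem injective_of_comp_eq_comp_of_isLocalizedModule {M N : Type*} [AddCommGroup M]
    [AddCommGroup N] [Module C M] [Module C N] (S : Submonoid C) (g : M →ₗ[C] N)
    [IsLocalizedModule S g] {φ : M →ₗ[C] M} {ψ : N →ₗ[C] N} (h : ψ ∘ₗ g = g ∘ₗ φ)
    (hφ : Function.Injective φ) : Function.Injective ψ := by
  have hψ : ψ = IsLocalizedModule.map S g g φ :=
    IsLocalizedModule.linearMap_ext S g g (h.trans (IsLocalizedModule.map_comp S g g φ).symm)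
  exact hψ ▸ IsLocalizedModule.map_injective S g g φ hφ

variable (S : Submonoid C) (f : R →ₐ[C] T) [IsLocalizedModule S f.toLinearMap]

theorem exists_smul_eq_map (t : T) : ∃ s ∈ S, ∃ x, s • t = f x :=
  have ⟨⟨x, s⟩, h⟩ := IsLocalizedModule.surj S f.toLinearMap t
  ⟨s, s.2, x, h⟩

/-- The extension of a two-sided ideal `I` of `R` along a central localization `f : R → S⁻¹R`:
the ideal of fractions with numerator in `I`. Primes of `R` are compared through their extensions.
Since `f` is only characterized by `IsLocalizedModule`, a fraction `x / s` is encoded as a `t` with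
`s • t = f x`. -/
def localizedIdeal (I : TwoSidedIdeal R) : TwoSidedIdeal T :=
  TwoSidedIdeal.mk' {t | ∃ s ∈ S, ∃ x ∈ I, s • t = f x}
    ⟨1, S.one_mem, 0, I.zero_mem, by simp⟩
    (by
      rintro t t' ⟨s, hs, x, hx, h⟩ ⟨s', hs', x', hx', h'⟩
      refine ⟨s * s', S.mul_mem hs hs', s' • x + s • x',
        I.add_mem (smul_mem_twoSidedIdeal hx s') (smul_mem_twoSidedIdeal hx' s), ?_⟩
      rw [map_add, map_smul, map_smul, ← h, ← h', smul_add, mul_smul, mul_smul, smul_comm s s' t])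
    (by
      rintro t ⟨s, hs, x, hx, h⟩
      exact ⟨s, hs, -x, I.neg_mem hx, by rw [smul_neg, map_neg, h]⟩)
    (by
      rintro t t' ⟨s', hs', x', hx', h'⟩
      obtain ⟨s, hs, x, h⟩ := exists_smul_eq_map S f t
      exact ⟨s * s', S.mul_mem hs hs', x * x', I.mul_mem_left _ _ hx', by
        rw [map_mul, ← h, ← h', smul_mul_smul_comm]⟩)
    (by
      rintro t t' ⟨s, hs, x, hx, h⟩
      obtain ⟨s', hs', x', h'⟩ := exists_smul_eq_map S f t'
      exact ⟨s * s', S.mul_mem hs hs', x * x', I.mul_mem_right _ _ hx, by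
        rw [map_mul, ← h, ← h', smul_mul_smul_comm]⟩)

theorem mem_localizedIdeal {I : TwoSidedIdeal R} {t : T} :
    t ∈ localizedIdeal S f I ↔ ∃ s ∈ S, ∃ x ∈ I, s • t = f x :=
  TwoSidedIdeal.mem_mk' ..

theorem map_mem_localizedIdeal_iff {I : TwoSidedIdeal R} {x : R} :
    f x ∈ localizedIdeal S f I ↔ ∃ s ∈ S, s • x ∈ I := by
  rw [mem_localizedIdeal]
  refine ⟨fun ⟨s, hs, y, hy, h⟩ => ?_, fun ⟨s, hs, hx⟩ => ⟨s, hs, s • x, hx, (map_smul f s x).symm⟩⟩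
  obtain ⟨c, hc⟩ := (IsLocalizedModule.eq_iff_exists S f.toLinearMap).mp ((map_smul f s x).trans h)
  refine ⟨c * s, S.mul_mem c.2 hs, ?_⟩
  rw [mul_smul, show (c : C) • s • x = (c : C) • y from hc]
  exact smul_mem_twoSidedIdeal hy _

theorem localizedIdeal_mono {I J : TwoSidedIdeal R} (hIJ : I ≤ J) :
    localizedIdeal S f I ≤ localizedIdeal S f J := fun t ht => by
  rw [mem_localizedIdeal] at ht ⊢
  exact ht.imp fun s ⟨hs, x, hx, h⟩ => ⟨hs, x, hIJ hx, h⟩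

variable {S}

theorem map_mem_localizedIdeal_iff_of_isPrimeTS {P : TwoSidedIdeal R} (hP : IsPrimeTS P)
    (hPS : Disjoint (S : Set C) (contractTS P : Ideal C)) {x : R} :
    f x ∈ localizedIdeal S f P ↔ x ∈ P :=
  (map_mem_localizedIdeal_iff S f).trans
    ⟨fun ⟨_, hs, hx⟩ => hP.mem_of_smul_mem (hPS.notMem_of_mem_left hs) hx,
      fun hx => ⟨1, S.one_mem, smul_mem_twoSidedIdeal hx 1⟩⟩

theorem isPrimeTS_localizedIdeal {P : TwoSidedIdeal R} (hP : IsPrimeTS P)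
    (hPS : Disjoint (S : Set C) (contractTS P : Ideal C)) :
    IsPrimeTS (localizedIdeal S f P) := by
  refine ⟨fun htop => hP.1 (eq_top_iff.mpr fun x _ => ?_), fun a b hab => ?_⟩
  · exact (map_mem_localizedIdeal_iff_of_isPrimeTS f hP hPS).mp (htop ▸ trivial)
  · obtain ⟨s, hs, x, hx⟩ := exists_smul_eq_map S f a
    obtain ⟨s', hs', y, hy⟩ := exists_smul_eq_map S f b
    have hxy : x ∈ P ∨ y ∈ P := hP.2 x y fun r => by
      rw [← map_mem_localizedIdeal_iff_of_isPrimeTS f hP hPS, map_mul, map_mul, ← hx, ← hy,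
        smul_mul_assoc, smul_mul_smul_comm]
      exact smul_mem_twoSidedIdeal (hab (f r)) _
    exact hxy.imp (fun h => (mem_localizedIdeal S f).mpr ⟨s, hs, x, h, hx⟩)
      fun h => (mem_localizedIdeal S f).mpr ⟨s', hs', y, h, hy⟩

theorem IsPrimeTS.eq_of_le_of_disjoint (f : R →ₐ[C] T) [IsLocalizedModule S f.toLinearMap]
    [IsArtinianRing T] {P Q : TwoSidedIdeal R}
    (hP : IsPrimeTS P) (hPS : Disjoint (S : Set C) (contractTS P : Ideal C)) (hQ : IsPrimeTS Q)
    (hQP : Q ≤ P) : Q = P := by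
  have hQS : Disjoint (S : Set C) (contractTS Q : Ideal C) :=
    hPS.mono_right fun c hc => hQP hc
  have heq : localizedIdeal S f Q = localizedIdeal S f P :=
    (isPrimeTS_localizedIdeal f hQ hQS).eq_of_le (isPrimeTS_localizedIdeal f hP hPS).1
      (localizedIdeal_mono S f hQP)
  ext x
  rw [← map_mem_localizedIdeal_iff_of_isPrimeTS f hQ hQS, heq,
    map_mem_localizedIdeal_iff_of_isPrimeTS f hP hPS]

theorem IsRegularElem.map_mem_nonZeroDivisors (S : Submonoid C) (f : R →ₐ[C] T)
    [IsLocalizedModule S f.toLinearMap] {r : R} (hr : IsRegularElem r) :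
    f r ∈ nonZeroDivisors T := by
  rw [mem_nonZeroDivisors_iff]
  constructor
  · refine (injective_iff_map_eq_zero (LinearMap.mulLeft C (f r))).mp ?_
    refine injective_of_comp_eq_comp_of_isLocalizedModule S f.toLinearMap
      (φ := LinearMap.mulLeft C r) (by ext; simp) ?_
    exact (injective_iff_map_eq_zero _).mpr hr.1
  · refine (injective_iff_map_eq_zero (LinearMap.mulRight C (f r))).mp ?_
    refine injective_of_comp_eq_comp_of_isLocalizedModule S f.toLinearMap
      (φ := LinearMap.mulRight C r) (by ext; simp) ?_
    exact (injective_iff_map_eq_zero _).mpr hr.2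

theorem exists_isRegularElem_mul_map_eq_map (hS : S ≤ nonZeroSMulDivisors C R) (t : T) :
    ∃ a s : R, IsRegularElem s ∧ t * f s = f a := by
  obtain ⟨s, hs, x, hx⟩ := exists_smul_eq_map S f t
  refine ⟨x, algebraMap C R s,
    isRegularElem_algebraMap (isSMulRegular_iff_mem_nonZeroSMulDivisors.mpr (hS hs)), ?_⟩
  rw [f.commutes, ← Algebra.commutes, ← Algebra.smul_def, hx]

end LocalizedAlgebra

theorem disjoint_nonZeroSMulDivisors_contractTS {C R : Type*} [CommRing C] [Ring R] [Algebra C R]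
    {P : TwoSidedIdeal R} {a : R} (ha : a ≠ 0) (hP : ∀ x ∈ P, ∀ r : R, a * r * x = 0) :
    Disjoint (nonZeroSMulDivisors C R : Set C) (contractTS P : Ideal C) := by
  refine Set.disjoint_left.mpr fun s hs hsP => ha (hs a ?_)
  rw [Algebra.smul_def, Algebra.commutes, ← mul_one a]
  exact hP _ hsP 1

open TensorProduct in
theorem annihilator_primes_minimal_and_artinian_quotient_general {C : Type v} {R : Type u}
    [CommRing C] [IsNoetherianRing C] [Ring R] [Algebra C R] [Module.Finite C R]
    (hCM : IsMaximalCohenMacaulay C R) :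
    (∀ P : TwoSidedIdeal R, IsPrimeTS P →
        (∃ a : R, a ≠ 0 ∧ ∀ x : R, x ∈ P ↔ ∀ r : R, a * r * x = 0) →
        ∀ Q : TwoSidedIdeal R, IsPrimeTS Q → Q ≤ P → Q = P) ∧
    ∃ (Q : Type max u v) (instQ : Ring Q),
      letI := instQ
      ∃ f : R →+* Q, IsArtinianRing Q ∧ Function.Injective f ∧
        (∀ s : R, IsRegularElem s → IsUnit (f s)) ∧
        ∀ q : Q, ∃ a s : R, IsRegularElem s ∧ q * f s = f a := by
  let S := nonZeroSMulDivisors C R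
  let f : R →ₐ[C] Localization S ⊗[C] R := Algebra.TensorProduct.includeRight
  have : IsLocalizedModule S f.toLinearMap :=
    inferInstanceAs (IsLocalizedModule S (TensorProduct.mk C (Localization S) R 1))
  have : IsArtinianRing (Localization S) :=
    isArtinianRing_localization_nonZeroSMulDivisors fun _ =>
      mem_minimalPrimes_of_isAssociatedPrime hCM
  have : IsArtinianRing (Localization S ⊗[C] R) := .of_finite (Localization S) _
  refine ⟨fun P hP ⟨a, ha, haP⟩ Q hQ hQP => ?_, Localization S ⊗[C] R, inferInstance, f, this, ?_,
    fun s hs => ?_, exists_isRegularElem_mul_map_eq_map f le_rfl⟩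
  · exact hP.eq_of_le_of_disjoint f
      (disjoint_nonZeroSMulDivisors_contractTS ha fun x => (haP x).mp) hQ hQP
  · exact (IsLocalizedModule.injective_iff_isRegular S f.toLinearMap).mpr fun c =>
      isSMulRegular_iff_mem_nonZeroSMulDivisors.mpr c.2
  · exact IsArtinianRing.isUnit_of_mem_nonZeroDivisors (hs.map_mem_nonZeroDivisors S f)

/-- Let `R` be a noetherian ring which is a finite module over its centre `Z(R)` and
which is `Z(R)`-Macaulay.  Then every annihilator prime of `R` (as a right module over
itself) is a minimal prime, and consequently `R` has an artinian classical quotient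
ring. -/
theorem annihilator_primes_minimal_and_artinian_quotient (R : Type u) [Ring R]
    [IsNoetherianRing R] [Module.Finite (Subring.center R) R]
    (hCM : IsMaximalCohenMacaulay (Subring.center R) R) :
    (∀ P : TwoSidedIdeal R, IsPrimeTS P →
        (∃ a : R, a ≠ 0 ∧ ∀ x : R, x ∈ P ↔ ∀ r : R, a * r * x = 0) →
        ∀ Q : TwoSidedIdeal R, IsPrimeTS Q → Q ≤ P → Q = P) ∧
    ∃ (Q : Type u) (instQ : Ring Q),
      letI := instQ
      ∃ f : R →+* Q, IsArtinianRing Q ∧ Function.Injective f ∧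
        (∀ s : R, IsRegularElem s → IsUnit (f s)) ∧
        ∀ q : Q, ∃ a s : R, IsRegularElem s ∧ q * f s = f a := by
  have := isNoetherianRing_of_faithfulSMul_of_finite (Subring.center R) R
  exact annihilator_primes_minimal_and_artinian_quotient_general hCM
end
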